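/- arXiv:2409.09250 — 4 statements merged into one kernel-verified Lean document; each statement's English description precedes it below -/
import Mathlib

section
/- Let A ∈ ℝ^{n×n} and C ∈ ℝ^{p×n}. The pair (A, C) is detectable if and only if for every complex eigenvalue s of A with Re(s) ≥ 0, the (n+p) × n complex matrix obtained by stacking sIₙ − A on top of C (with A, C viewed as complex matrices) has rank n. -/
/-!
The rank condition says that no unstable eigenvalue `s` of `A` admits an eigenvector killed by `C`.
For the pair `(Aᵀ, Cᵀ)`, written `(A, B)` in the lemmas, this is the Hautus condition: no nonzero
complex row vector `w` satisfies `w A = s w` and `w B = 0` with `0 ≤ Re s` (`HautusStable`).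

The Hautus condition is unchanged by a feedback `A ↦ A + B K`, so it is necessary. For sufficiency,
the number of unstable eigenvalues is lowered by successive feedbacks. The key is the identity
`charpoly_deflation`: if `W A = S W`, then
`χ(A + Q W) * χ(S) = χ(A) * χ(S + W Q)`.
Let `w` be a left eigenvector of `A` for an unstable `s`. For nonreal `s`, let `W` be the real
two-row matrix with rows `Re w`, `Im w`; for real `s`, let its rows be a real eigenvector and `0`.
Then `W A = S W` with `S` a real `2 × 2` matrix having the eigenvalue `s`.
Since `w B ≠ 0`, some rank-one `k` makes `S + W B k` Hurwitz. The feedback `K = k W` (so `Q = B k`)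
then trades the eigenvalues of `S` for stable ones, and induction on the number of unstable
eigenvalues finishes the proof.
-/

open Matrix

/-- A real square matrix is Hurwitz if every eigenvalue (over `ℂ`) has negative real part. -/
def IsHurwitz {n : ℕ} (M : Matrix (Fin n) (Fin n) ℝ) : Prop :=
  ∀ μ ∈ spectrum ℂ (M.map Complex.ofReal), μ.re < 0

/-- `(A, B)` is stabilizable if there is a feedback `K` making `A + B K` Hurwitz. -/
def IsStabilizable {n m : ℕ} (A : Matrix (Fin n) (Fin n) ℝ)
    (B : Matrix (Fin n) (Fin m) ℝ) : Prop :=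
  ∃ K : Matrix (Fin m) (Fin n) ℝ, IsHurwitz (A + B * K)

/-- `(A, C)` is detectable if `(Aᵀ, Cᵀ)` is stabilizable. -/
def IsDetectable {n p : ℕ} (A : Matrix (Fin n) (Fin n) ℝ)
    (C : Matrix (Fin p) (Fin n) ℝ) : Prop :=
  IsStabilizable Aᵀ Cᵀ

/-- The number of roots in the closed right half-plane, with multiplicity, of the characteristic
polynomial of a real matrix. -/
noncomputable def unstableCount {n : ℕ} (M : Matrix (Fin n) (Fin n) ℝ) : ℕ := by
  classical
  exact ((M.charpoly.map Complex.ofRealHom).roots.filter (fun z : ℂ => 0 ≤ z.re)).card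

/-- The Hautus condition for stabilizability: a left eigenvector of `A` for an eigenvalue in the
closed right half-plane is not annihilated by `B`. -/
def HautusStable {n m : ℕ} (A : Matrix (Fin n) (Fin n) ℝ) (B : Matrix (Fin n) (Fin m) ℝ) : Prop :=
  ∀ (s : ℂ) (w : Fin n → ℂ), 0 ≤ s.re → w ᵥ* A.map Complex.ofReal = s • w →
    w ᵥ* B.map Complex.ofReal = 0 → w = 0

/-- Both sides are characteristic polynomials of block triangular matrices that are conjugate by
the shear `(x, y) ↦ (x, y + W x)`. -/
lemma charpoly_deflation {n r : ℕ} (A : Matrix (Fin n) (Fin n) ℝ) (S : Matrix (Fin r) (Fin r) ℝ)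
    (W : Matrix (Fin r) (Fin n) ℝ) (Q : Matrix (Fin n) (Fin r) ℝ) (h : W * A = S * W) :
    (A + Q * W).charpoly * S.charpoly = A.charpoly * (S + W * Q).charpoly := by
  have e : fromBlocks (A + Q * W) Q 0 S =
      fromBlocks 1 0 (-W) 1 * (fromBlocks A Q 0 (S + W * Q) * fromBlocks 1 0 W 1) := by
    simp only [fromBlocks_multiply]
    congr 1 <;> simp [Matrix.mul_add, Matrix.add_mul, h, Matrix.mul_assoc]
    abel
  have e2 : (fromBlocks 1 0 W 1 * fromBlocks 1 0 (-W) 1 :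
      Matrix (Fin n ⊕ Fin r) (Fin n ⊕ Fin r) ℝ) = 1 := by
    simp [fromBlocks_multiply]
  rw [← charpoly_fromBlocks_zero₂₁ (M₁₂ := Q), ← charpoly_fromBlocks_zero₂₁ (M₁₂ := Q), e,
    Matrix.charpoly_mul_comm, Matrix.mul_assoc, e2, Matrix.mul_one]

lemma charpoly_map_ofReal {n : ℕ} (M : Matrix (Fin n) (Fin n) ℝ) :
    (M.map Complex.ofReal).charpoly = M.charpoly.map Complex.ofRealHom :=
  Matrix.charpoly_map M Complex.ofRealHom

lemma mem_spectrum_iff_mem_roots {n : ℕ} (M : Matrix (Fin n) (Fin n) ℝ) (s : ℂ) :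
    s ∈ spectrum ℂ (M.map Complex.ofReal) ↔ s ∈ (M.charpoly.map Complex.ofRealHom).roots := by
  rw [Matrix.mem_spectrum_iff_isRoot_charpoly, charpoly_map_ofReal,
    Polynomial.mem_roots ((M.charpoly_monic.map _).ne_zero)]

lemma unstableCount_eq_zero_iff {n : ℕ} (M : Matrix (Fin n) (Fin n) ℝ) :
    unstableCount M = 0 ↔ IsHurwitz M := by
  simp only [unstableCount, IsHurwitz, mem_spectrum_iff_mem_roots, Multiset.card_eq_zero,
    Multiset.filter_eq_nil, not_le]

lemma unstableCount_deflation {n r : ℕ} (A : Matrix (Fin n) (Fin n) ℝ)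
    (S : Matrix (Fin r) (Fin r) ℝ)
    (W : Matrix (Fin r) (Fin n) ℝ) (Q : Matrix (Fin n) (Fin r) ℝ) (h : W * A = S * W) :
    unstableCount (A + Q * W) + unstableCount S = unstableCount A + unstableCount (S + W * Q) := by
  have e := congrArg (Polynomial.map Complex.ofRealHom) (charpoly_deflation A S W Q h)
  have ne : ∀ {k : ℕ} (M : Matrix (Fin k) (Fin k) ℝ), M.charpoly.map Complex.ofRealHom ≠ 0 :=
    fun M => (M.charpoly_monic.map _).ne_zero
  rw [Polynomial.map_mul, Polynomial.map_mul] at e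
  have e' := congrArg Polynomial.roots e
  rw [Polynomial.roots_mul (mul_ne_zero (ne _) (ne _)),
    Polynomial.roots_mul (mul_ne_zero (ne _) (ne _))] at e'
  unfold unstableCount
  rw [← Multiset.card_add, ← Multiset.card_add, ← Multiset.filter_add, ← Multiset.filter_add, e']

lemma mem_spectrum_fin_two (S : Matrix (Fin 2) (Fin 2) ℝ) (s : ℂ) :
    s ∈ spectrum ℂ (S.map Complex.ofReal) ↔ s ^ 2 - S.trace * s + S.det = 0 := by
  rw [Matrix.mem_spectrum_iff_isRoot_charpoly, charpoly_map_ofReal, Matrix.charpoly_fin_two]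
  simp [Polynomial.IsRoot]

/-- The Routh–Hurwitz criterion in dimension two. -/
lemma isHurwitz_fin_two (S : Matrix (Fin 2) (Fin 2) ℝ) (ht : S.trace < 0) (hd : 0 < S.det) :
    IsHurwitz S := by
  intro s hs
  rw [mem_spectrum_fin_two] at hs
  have h1 := congrArg Complex.re hs
  have h2 := congrArg Complex.im hs
  simp [pow_two] at h1 h2
  generalize S.trace = t at *
  generalize S.det = d at *
  by_contra! hre
  -- the imaginary part reads `y (2 x - t) = 0`, so an eigenvalue with `0 ≤ x` is real
  have hy : s.im = 0 := by
    have : s.im * (2 * s.re - t) = 0 := by linarith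
    rcases mul_eq_zero.1 this with h | h
    · exact h
    · linarith
  rw [hy] at h1
  nlinarith [mul_nonneg hre (neg_nonneg.2 ht.le), mul_self_nonneg s.re]

/-- A feedback through the single input `j` and the functionals in the rows of `W` removes unstable
eigenvalues as soon as it replaces `S` by a Hurwitz matrix. -/
lemma exists_feedback_of_fin_two {n m : ℕ} (A : Matrix (Fin n) (Fin n) ℝ)
    (B : Matrix (Fin n) (Fin m) ℝ) (S : Matrix (Fin 2) (Fin 2) ℝ) (W : Matrix (Fin 2) (Fin n) ℝ)
    (h : W * A = S * W) (s : ℂ) (hs : 0 ≤ s.re) (hsS : s ^ 2 - S.trace * s + S.det = 0)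
    (j : Fin m) (κ : Fin 2 → ℝ)
    (ht : (S + vecMulVec ((W * B).col j) κ).trace < 0)
    (hd : 0 < (S + vecMulVec ((W * B).col j) κ).det) :
    ∃ K : Matrix (Fin m) (Fin n) ℝ, unstableCount (A + B * K) < unstableCount A := by
  have hk : W * (B * vecMulVec (Pi.single j 1) κ) = vecMulVec ((W * B).col j) κ := by
    rw [← Matrix.mul_assoc, mul_vecMulVec, mulVec_single_one]
  have e := unstableCount_deflation A S W (B * vecMulVec (Pi.single j 1) κ) h
  rw [hk, (unstableCount_eq_zero_iff _).2 (isHurwitz_fin_two _ ht hd)] at e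
  have hS : unstableCount S ≠ 0 := fun h0 => by
    have := (unstableCount_eq_zero_iff S).1 h0 s ((mem_spectrum_fin_two S s).2 hsS)
    linarith
  refine ⟨vecMulVec (Pi.single j 1) κ * W, ?_⟩
  rw [← Matrix.mul_assoc]
  omega

lemma re_vecMul {n m : ℕ} (w : Fin n → ℂ) (M : Matrix (Fin n) (Fin m) ℝ) (j : Fin m) :
    ((w ᵥ* M.map Complex.ofReal) j).re = ((fun i => (w i).re) ᵥ* M) j := by
  simp [vecMul, dotProduct]

lemma im_vecMul {n m : ℕ} (w : Fin n → ℂ) (M : Matrix (Fin n) (Fin m) ℝ) (j : Fin m) :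
    ((w ᵥ* M.map Complex.ofReal) j).im = ((fun i => (w i).im) ᵥ* M) j := by
  simp [vecMul, dotProduct]

/-- The case of a real eigenvalue. -/
lemma exists_feedback_real {n m : ℕ} (A : Matrix (Fin n) (Fin n) ℝ)
    (B : Matrix (Fin n) (Fin m) ℝ) (σ : ℝ) (hσ : 0 ≤ σ) (x : Fin n → ℝ) (hx : x ᵥ* A = σ • x)
    (j : Fin m) (hj : (x ᵥ* B) j ≠ 0) :
    ∃ K : Matrix (Fin m) (Fin n) ℝ, unstableCount (A + B * K) < unstableCount A := by
  -- padding `W` with a zero row lets the second eigenvalue of `S` be any stable number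
  refine exists_feedback_of_fin_two A B !![σ, 0; 0, -1] (Matrix.of ![x, 0]) ?_ (σ : ℂ)
    (by simpa using hσ) ?_ j ![(-σ - 1) / (x ᵥ* B) j, 0] ?_ ?_
  · ext a c
    have := congrFun hx c
    fin_cases a <;> simp_all [Matrix.mul_apply, vecMul, dotProduct, Fin.sum_univ_two]
  · simp [Matrix.trace_fin_two, Matrix.det_fin_two]
    ring
  all_goals
    have e0 : ((Matrix.of ![x, 0] : Matrix (Fin 2) (Fin n) ℝ) * B) 0 j = (x ᵥ* B) j := by
      simp [Matrix.mul_apply, vecMul, dotProduct]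
    have e1 : ((Matrix.of ![x, 0] : Matrix (Fin 2) (Fin n) ℝ) * B) 1 j = 0 := by
      simp [Matrix.mul_apply]
    simp only [Matrix.trace_fin_two, Matrix.det_fin_two, Matrix.add_apply, vecMulVec_apply,
      Matrix.col_apply, e0, e1]
    simp [mul_div_cancel₀ _ hj]
  linarith

/-- The case of a nonreal eigenvalue `s`, with left eigenvector `u + i v`. -/
lemma exists_feedback_nonreal {n m : ℕ} (A : Matrix (Fin n) (Fin n) ℝ)
    (B : Matrix (Fin n) (Fin m) ℝ) (s : ℂ) (hs : 0 ≤ s.re) (hω : s.im ≠ 0) (u v : Fin n → ℝ)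
    (hu : u ᵥ* A = s.re • u - s.im • v) (hv : v ᵥ* A = s.im • u + s.re • v)
    (j : Fin m) (hj : (u ᵥ* B) j ≠ 0 ∨ (v ᵥ* B) j ≠ 0) :
    ∃ K : Matrix (Fin m) (Fin n) ℝ, unstableCount (A + B * K) < unstableCount A := by
  obtain ⟨g₁, hg₁⟩ : ∃ g, g = (u ᵥ* B) j := ⟨_, rfl⟩
  obtain ⟨g₂, hg₂⟩ : ∃ g, g = (v ᵥ* B) j := ⟨_, rfl⟩
  rw [← hg₁, ← hg₂] at hj
  have hN : g₁ ^ 2 + g₂ ^ 2 ≠ 0 := by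
    rcases hj with h | h <;> positivity
  -- `κ = α g + β g^⊥`: `α` is chosen to make the trace `-1`, then `β` to make the determinant `1`
  obtain ⟨α, hα⟩ : ∃ α, α * (g₁ ^ 2 + g₂ ^ 2) = -2 * s.re - 1 :=
    ⟨_, div_mul_cancel₀ _ hN⟩
  obtain ⟨τ, hτ⟩ : ∃ τ, τ * s.im = 1 - (s.re ^ 2 + s.im ^ 2 + s.re * (-2 * s.re - 1)) :=
    ⟨_, div_mul_cancel₀ _ hω⟩
  obtain ⟨β, hβ⟩ : ∃ β, β * (g₁ ^ 2 + g₂ ^ 2) = τ := ⟨_, div_mul_cancel₀ _ hN⟩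
  refine exists_feedback_of_fin_two A B !![s.re, -s.im; s.im, s.re] (Matrix.of ![u, v]) ?_ s
    hs ?_ j ![α * g₁ + β * g₂, α * g₂ - β * g₁] ?_ ?_
  · ext a c
    have h1 := congrFun hu c
    have h2 := congrFun hv c
    fin_cases a <;> simp_all [Matrix.mul_apply, vecMul, dotProduct, Fin.sum_univ_two]
    ring
  · apply Complex.ext <;>
      simp [Matrix.trace_fin_two, Matrix.det_fin_two, pow_two] <;> ring
  all_goals
    have e0 : ((Matrix.of ![u, v] : Matrix (Fin 2) (Fin n) ℝ) * B) 0 j = g₁ := by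
      simp [hg₁, Matrix.mul_apply, vecMul, dotProduct]
    have e1 : ((Matrix.of ![u, v] : Matrix (Fin 2) (Fin n) ℝ) * B) 1 j = g₂ := by
      simp [hg₂, Matrix.mul_apply, vecMul, dotProduct]
    simp only [Matrix.trace_fin_two, Matrix.det_fin_two, Matrix.add_apply, vecMulVec_apply,
      Matrix.col_apply, e0, e1]
    simp
  · linarith
  · have : (s.re + g₁ * (α * g₁ + β * g₂)) * (s.re + g₂ * (α * g₂ - β * g₁)) -
        (-s.im + g₁ * (α * g₂ - β * g₁)) * (s.im + g₂ * (α * g₁ + β * g₂)) = 1 := by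
      linear_combination s.re * hα + s.im * hβ + hτ
    linarith

lemma exists_left_eigenvector {n : ℕ} (M : Matrix (Fin n) (Fin n) ℂ) (s : ℂ) :
    s ∈ spectrum ℂ M ↔ ∃ w ≠ 0, w ᵥ* M = s • w := by
  rw [spectrum.mem_iff, Matrix.isUnit_iff_isUnit_det, isUnit_iff_ne_zero, not_not,
    ← Matrix.exists_vecMul_eq_zero_iff]
  refine exists_congr fun w => and_congr_right fun _ => ?_
  rw [Algebra.algebraMap_eq_smul_one, Matrix.vecMul_sub, Matrix.vecMul_smul, Matrix.vecMul_one,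
    sub_eq_zero, eq_comm]

lemma map_add_mul {n m : ℕ} (A : Matrix (Fin n) (Fin n) ℝ)
    (B : Matrix (Fin n) (Fin m) ℝ) (K : Matrix (Fin m) (Fin n) ℝ) :
    (A + B * K).map Complex.ofReal =
      A.map Complex.ofReal + B.map Complex.ofReal * K.map Complex.ofReal := by
  ext i j
  simp [Matrix.mul_apply]

lemma HautusStable.feedback {n m : ℕ} {A : Matrix (Fin n) (Fin n) ℝ}
    {B : Matrix (Fin n) (Fin m) ℝ} (h : HautusStable A B) (K : Matrix (Fin m) (Fin n) ℝ) :
    HautusStable (A + B * K) B := by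
  intro s w hs hA hB
  refine h s w hs ?_ hB
  rwa [map_add_mul, Matrix.vecMul_add, ← Matrix.vecMul_vecMul, hB, Matrix.zero_vecMul,
    add_zero] at hA

lemma HautusStable.exists_lt {n m : ℕ} {A : Matrix (Fin n) (Fin n) ℝ}
    {B : Matrix (Fin n) (Fin m) ℝ} (h : HautusStable A B) (hA : ¬ IsHurwitz A) :
    ∃ K : Matrix (Fin m) (Fin n) ℝ, unstableCount (A + B * K) < unstableCount A := by
  simp only [IsHurwitz, not_forall, not_lt] at hA
  obtain ⟨s, hsA, hs⟩ := hA
  obtain ⟨w, hw0, hw⟩ := (exists_left_eigenvector _ s).1 hsA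
  have hB : w ᵥ* B.map Complex.ofReal ≠ 0 := fun hB => hw0 (h s w hs hw hB)
  obtain ⟨j, hj⟩ := Function.ne_iff.1 hB
  have hj' : ((fun i => (w i).re) ᵥ* B) j ≠ 0 ∨ ((fun i => (w i).im) ᵥ* B) j ≠ 0 := by
    rw [← re_vecMul, ← im_vecMul]
    by_contra! hc
    exact hj (Complex.ext hc.1 hc.2)
  have hu : (fun i => (w i).re) ᵥ* A = s.re • (fun i => (w i).re) - s.im • (fun i => (w i).im) := by
    ext c
    rw [← re_vecMul, hw]
    simp
  have hv : (fun i => (w i).im) ᵥ* A = s.im • (fun i => (w i).re) + s.re • (fun i => (w i).im) := by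
    ext c
    rw [← im_vecMul, hw]
    simp
    ring
  by_cases hω : s.im = 0
  · rw [hω, zero_smul, sub_zero] at hu
    rw [hω, zero_smul, zero_add] at hv
    rcases hj' with hj' | hj'
    · exact exists_feedback_real A B s.re hs _ hu j hj'
    · exact exists_feedback_real A B s.re hs _ hv j hj'
  · exact exists_feedback_nonreal A B s hs hω _ _ hu hv j hj'

lemma HautusStable.isStabilizable {n m : ℕ} {A : Matrix (Fin n) (Fin n) ℝ}
    {B : Matrix (Fin n) (Fin m) ℝ} (h : HautusStable A B) : IsStabilizable A B := by
  induction hN : unstableCount A using Nat.strong_induction_on generalizing A with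
  | _ N ih =>
    by_cases hA : IsHurwitz A
    · exact ⟨0, by simpa using hA⟩
    · obtain ⟨K, hK⟩ := h.exists_lt hA
      obtain ⟨L, hL⟩ := ih _ (hN ▸ hK) (h.feedback K) rfl
      exact ⟨K + L, by rwa [Matrix.mul_add, ← add_assoc]⟩

lemma IsStabilizable.hautusStable {n m : ℕ} {A : Matrix (Fin n) (Fin n) ℝ}
    {B : Matrix (Fin n) (Fin m) ℝ} (h : IsStabilizable A B) : HautusStable A B := by
  obtain ⟨K, hK⟩ := h
  intro s w hs hA hB
  by_contra hw
  refine absurd (hK s ((exists_left_eigenvector _ s).2 ⟨w, hw, ?_⟩)) hs.not_gt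
  rw [map_add_mul, Matrix.vecMul_add, ← Matrix.vecMul_vecMul, hB, Matrix.zero_vecMul, add_zero, hA]

lemma rank_fromRows_eq_iff {n p : ℕ} (M : Matrix (Fin n) (Fin n) ℂ) (C : Matrix (Fin p) (Fin n) ℂ) :
    (Matrix.fromRows M C).rank = n ↔ ∀ w, M *ᵥ w = 0 → C *ᵥ w = 0 → w = 0 := by
  have h := LinearMap.finrank_range_add_finrank_ker (Matrix.fromRows M C).mulVecLin
  rw [Module.finrank_fin_fun] at h
  have h2 : (Matrix.fromRows M C).rank = n ↔ LinearMap.ker (Matrix.fromRows M C).mulVecLin = ⊥ := by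
    rw [← Submodule.finrank_eq_zero (R := ℂ), Matrix.rank]
    omega
  rw [h2, LinearMap.ker_eq_bot']
  refine forall_congr' fun w => ?_
  rw [Matrix.mulVecLin_apply, Matrix.fromRows_mulVec, ← and_imp]
  refine imp_congr_left ⟨fun h => ⟨funext fun i => congrFun h (Sum.inl i),
    funext fun i => congrFun h (Sum.inr i)⟩, fun h => ?_⟩
  rw [h.1, h.2]
  ext (i | i) <;> rfl

/-- `(A,C)` is detectable iff for every eigenvalue `s` of `A` with `Re s ≥ 0`,
the complex matrix obtained by stacking `sIₙ − A` on top of `C` has rank `n`. -/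
theorem detectable_iff_rank_eigen {n p : ℕ}
    (A : Matrix (Fin n) (Fin n) ℝ) (C : Matrix (Fin p) (Fin n) ℝ) :
    IsDetectable A C ↔
      ∀ s ∈ spectrum ℂ (A.map Complex.ofReal), 0 ≤ s.re →
        (Matrix.fromRows
            (s • (1 : Matrix (Fin n) (Fin n) ℂ) - A.map Complex.ofReal)
            (C.map Complex.ofReal)).rank = n := by
  have hst : IsDetectable A C ↔ HautusStable Aᵀ Cᵀ :=
    ⟨IsStabilizable.hautusStable, HautusStable.isStabilizable⟩
  rw [hst]
  simp only [HautusStable, rank_fromRows_eq_iff, Matrix.transpose_map, Matrix.vecMul_transpose,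
    Matrix.sub_mulVec, Matrix.smul_mulVec, Matrix.one_mulVec, sub_eq_zero]
  constructor
  · intro h s _ hs w hA hC
    exact h s w hs hA.symm hC
  · intro h s w hs hA hC
    by_contra hw
    refine hw (h s ?_ hs w hA.symm hC)
    rw [Matrix.mem_spectrum_iff_isRoot_charpoly, ← Matrix.charpoly_transpose,
      ← Matrix.mem_spectrum_iff_isRoot_charpoly]
    exact (exists_left_eigenvector _ s).2 ⟨w, hw, by rwa [Matrix.vecMul_transpose]⟩
end

section
/- Let A ∈ ℝ^{n×n}, B ∈ ℝ^{n×m}, let Q ∈ ℝ^{n×n} be symmetric positive semidefinite with positive semidefinite square root Q^{1/2}, and let R ∈ ℝ^{m×m} be symmetric positive definite. If (A, B) is stabilizable and (A, Q^{1/2}) is detectable, then there exists a unique symmetric positive semidefinite matrix X ∈ ℝ^{n×n} such that AᵀX + XA + Q − XBR⁻¹BᵀX = 0 and A − BR⁻¹BᵀX is Hurwitz. -/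
/-!
Uniqueness is the uniqueness of solutions of a Sylvester equation: for two stabilizing solutions
`X`, `Y` with closed loops `M`, `M'`, the Riccati equations give `Mᵀ (X - Y) + (X - Y) M' = 0`,
and this forces `X = Y` when `M` and `M'` are Hurwitz (`sylvester_eq_zero`).

Existence is Kleinman's iteration. Starting from a stabilizing gain, let `X` be the cost of the
current gain `K`, i.e. the solution of the Lyapunov equation
`(A + BK)ᵀ X + X (A + BK) + Q + Kᵀ R K = 0`, and replace `K` by `-R⁻¹ Bᵀ X`. Completing the square
(`lyapunov_cost_change_gain`) together with detectability (`isHurwitz_closedLoop`) shows that the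
new gain is again stabilizing, and that its cost is at most `X` (`exists_kleinman_step`). The costs
form a decreasing sequence of positive semidefinite matrices, so they converge; the limit solves
the Riccati equation, and `isHurwitz_closedLoop` shows that it is stabilizing.

The facts on Lyapunov and Sylvester equations are obtained without matrix exponentials: the Cayley
transform `F = (1 + M) (1 - M)⁻¹` of a Hurwitz matrix has spectrum in the open unit disc, hence
`F ^ k → 0` by Gelfand's formula, and it turns `Mᵀ X + X M = -S` into the Stein equation
`X - Fᵀ X F = 2 (1 - M)⁻ᵀ S (1 - M)⁻¹`, from which uniqueness and positivity of `X` are read off by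
iteration.
-/

open Matrix

open Filter Topology

/-! ### Hurwitz matrices and eigenvectors -/

theorem mem_spectrum_iff_exists_eigenvector {n : ℕ} (N : Matrix (Fin n) (Fin n) ℂ) (μ : ℂ) :
    μ ∈ spectrum ℂ N ↔ ∃ v ≠ 0, N *ᵥ v = μ • v := by
  rw [spectrum.mem_iff, Matrix.isUnit_iff_isUnit_det, isUnit_iff_ne_zero, not_not,
    ← Matrix.exists_mulVec_eq_zero_iff]
  refine exists_congr fun v => and_congr_right fun _ => ?_
  rw [Matrix.sub_mulVec, sub_eq_zero, Algebra.algebraMap_eq_smul_one, Matrix.smul_mulVec,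
    Matrix.one_mulVec, eq_comm]

/-- Real form of the Hurwitz condition: `x + i y` is an eigenvector for the eigenvalue `a + i b`. -/
theorem isHurwitz_iff_real {n : ℕ} (M : Matrix (Fin n) (Fin n) ℝ) :
    IsHurwitz M ↔ ∀ (a b : ℝ) (x y : Fin n → ℝ), (x ≠ 0 ∨ y ≠ 0) →
      M *ᵥ x = a • x - b • y → M *ᵥ y = b • x + a • y → a < 0 := by
  have key : ∀ v : Fin n → ℂ, ∀ i, (M.map Complex.ofReal *ᵥ v) i =
      ⟨(M *ᵥ fun j => (v j).re) i, (M *ᵥ fun j => (v j).im) i⟩ := by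
    intro v i
    apply Complex.ext <;> simp [mulVec, dotProduct]
  constructor
  · intro h a b x y hxy hx hy
    refine h ⟨a, b⟩ ((mem_spectrum_iff_exists_eigenvector _ _).2
      ⟨fun j => ⟨x j, y j⟩, ?_, ?_⟩)
    · intro h0
      rcases hxy with h1 | h1
      · exact h1 (funext fun j => congrArg Complex.re (congrFun h0 j))
      · exact h1 (funext fun j => congrArg Complex.im (congrFun h0 j))
    · funext i
      rw [key]
      have h1 := congrFun hx i
      have h2 := congrFun hy i
      apply Complex.ext
      · simpa using h1
      · simp only [Pi.add_apply, Pi.smul_apply, smul_eq_mul] at h2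
        simp only [Pi.smul_apply, smul_eq_mul, Complex.mul_im, h2]
        ring
  · intro h μ hμ
    obtain ⟨v, hv, hMv⟩ := (mem_spectrum_iff_exists_eigenvector _ _).1 hμ
    refine h μ.re μ.im (fun j => (v j).re) (fun j => (v j).im) ?_ ?_ ?_
    · by_contra! h0
      exact hv (funext fun j => Complex.ext (congrFun h0.1 j) (congrFun h0.2 j))
    · funext i
      have h1 := congrArg Complex.re ((key v i).symm.trans (congrFun hMv i))
      simpa using h1
    · funext i
      have h1 := congrArg Complex.im ((key v i).symm.trans (congrFun hMv i))
      simp only [Pi.smul_apply, smul_eq_mul, Complex.mul_im] at h1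
      simp only [Pi.add_apply, Pi.smul_apply, smul_eq_mul, h1]
      ring

theorem IsHurwitz.transpose {n : ℕ} {M : Matrix (Fin n) (Fin n) ℝ} (h : IsHurwitz M) :
    IsHurwitz Mᵀ := by
  intro μ hμ
  apply h μ
  rw [spectrum.mem_iff, Matrix.isUnit_iff_isUnit_det] at hμ ⊢
  rw [← Matrix.det_transpose]
  simpa [Algebra.algebraMap_eq_smul_one, Matrix.transpose_map] using hμ

section
attribute [local instance] Matrix.linftyOpNormedRing Matrix.linftyOpNormedAlgebra

/-- By Gelfand's formula, `‖N ^ k‖ ≤ q ^ k` eventually, for some `q < 1`. -/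
theorem tendsto_pow_zero_of_spectrum {n : ℕ} (N : Matrix (Fin n) (Fin n) ℂ)
    (h : ∀ μ ∈ spectrum ℂ N, ‖μ‖ < 1) : Tendsto (fun k : ℕ => N ^ k) atTop (𝓝 0) := by
  rcases subsingleton_or_nontrivial (Matrix (Fin n) (Fin n) ℂ) with hs | hs
  · exact tendsto_const_nhds.congr fun k => Subsingleton.elim _ _
  have hr : spectralRadius ℂ N < (1 : NNReal) :=
    spectrum.spectralRadius_lt_of_forall_lt N fun μ hμ => h μ hμ
  obtain ⟨q, hq, hq1⟩ := ENNReal.lt_iff_exists_nnreal_btwn.1 hr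
  have hlim := (spectrum.pow_nnnorm_pow_one_div_tendsto_nhds_spectralRadius N).eventually_lt_const hq
  refine tendsto_zero_iff_norm_tendsto_zero.2 ?_
  have hq1' : (q : ℝ) < 1 := by exact_mod_cast hq1
  refine squeeze_zero' (Eventually.of_forall fun _ => norm_nonneg _) ?_
    (tendsto_pow_atTop_nhds_zero_of_lt_one q.2 hq1')
  filter_upwards [hlim, eventually_gt_atTop 0] with k hk hk0
  rw [one_div, ENNReal.rpow_inv_lt_iff (by exact_mod_cast hk0), ENNReal.rpow_natCast] at hk
  have : ‖N ^ k‖₊ < q ^ k := by exact_mod_cast hk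
  exact_mod_cast this.le
end

/-- The Cayley transform `F = (1 + M) (1 - M)⁻¹` of a Hurwitz matrix has powers tending to `0`. Here `N`
is the inverse of `1 - M`. -/
theorem IsHurwitz.exists_cayley {n : ℕ} {M : Matrix (Fin n) (Fin n) ℝ} (h : IsHurwitz M) :
    ∃ F N : Matrix (Fin n) (Fin n) ℝ, F = (1 + M) * N ∧ (1 - M) * N = 1 ∧
      Tendsto (fun k : ℕ => F ^ k) atTop (𝓝 0) := by
  have hdet : (1 - M).det ≠ 0 := by
    intro h0
    obtain ⟨v, hv, hMv⟩ := Matrix.exists_mulVec_eq_zero_iff.2 h0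
    rw [Matrix.sub_mulVec, Matrix.one_mulVec, sub_eq_zero] at hMv
    have := (isHurwitz_iff_real M).1 h 1 0 v 0 (Or.inl hv) (by simp [← hMv]) (by simp)
    linarith
  have hN : (1 - M) * (1 - M)⁻¹ = 1 := Matrix.mul_nonsing_inv _ (isUnit_iff_ne_zero.2 hdet)
  refine ⟨_, (1 - M)⁻¹, rfl, hN, ?_⟩
  generalize (1 - M)⁻¹ = N at hN
  set φ : Matrix (Fin n) (Fin n) ℝ →+* Matrix (Fin n) (Fin n) ℂ := Complex.ofRealHom.mapMatrix
  have hφ : Tendsto (fun k : ℕ => φ ((1 + M) * N) ^ k) atTop (𝓝 0) := by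
    refine tendsto_pow_zero_of_spectrum _ fun μ hμ => ?_
    obtain ⟨w, hw, hFw⟩ := (mem_spectrum_iff_exists_eigenvector _ _).1 hμ
    have hNc : (1 - φ M) * φ N = 1 := by
      rw [← map_one φ, ← map_sub, ← map_mul, hN]
    set v := φ N *ᵥ w
    have hwv : w = v - φ M *ᵥ v := by
      rw [← one_mulVec w, ← hNc, ← mulVec_mulVec, sub_mulVec, one_mulVec]
    have hv : v ≠ 0 := by
      intro h0
      exact hw (by rw [hwv, h0]; simp)
    have h1 : v + φ M *ᵥ v = μ • (v - φ M *ᵥ v) := by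
      rw [← hwv, ← hFw, map_mul, map_add, map_one, ← mulVec_mulVec, add_mulVec, one_mulVec]
    have h2 : (μ + 1) • (φ M *ᵥ v) = (μ - 1) • v := by
      linear_combination (norm := module) h1
    have hμ1 : μ + 1 ≠ 0 := by
      intro h0
      rw [h0, zero_smul, eq_comm, smul_eq_zero] at h2
      rcases h2 with h2 | h2
      · have : (2 : ℂ) = 0 := by linear_combination h0 - h2
        norm_num at this
      · exact hv h2
    have h3 : φ M *ᵥ v = ((μ - 1) / (μ + 1)) • v := by
      rw [div_eq_inv_mul, mul_smul, ← h2, smul_smul, inv_mul_cancel₀ hμ1, one_smul]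
    -- `Re ((μ - 1) / (μ + 1)) = (|μ|² - 1) / |μ + 1|²`
    have h4 : ((μ - 1) / (μ + 1)).re < 0 :=
      h _ ((mem_spectrum_iff_exists_eigenvector _ _).2 ⟨v, hv, h3⟩)
    have h5 : 0 < Complex.normSq (μ + 1) := Complex.normSq_pos.2 hμ1
    rw [Complex.div_re, ← add_div, div_lt_iff₀ h5, zero_mul] at h4
    simp at h4
    have h6 : ‖μ‖ ^ 2 < 1 := by
      rw [Complex.sq_norm, Complex.normSq_apply]
      linarith
    exact (sq_lt_one_iff₀ (norm_nonneg _)).1 h6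
  have hre : Continuous fun P : Matrix (Fin n) (Fin n) ℂ => P.map Complex.re :=
    continuous_id.matrix_map Complex.continuous_re
  have := (hre.tendsto 0).comp hφ
  rw [show (0 : Matrix (Fin n) (Fin n) ℂ).map Complex.re = 0 by ext; simp] at this
  refine this.congr fun k => ?_
  rw [Function.comp_apply, ← map_pow]
  ext i j
  simp [φ]

/-! ### Sylvester and Lyapunov equations -/

/-- The Cayley transform turns the Sylvester operator `X ↦ Mᵀ X + X M'` into a Stein operator. -/
theorem sylvester_stein {n : ℕ} {M N : Matrix (Fin n) (Fin n) ℝ} (hN : (1 - M) * N = 1)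
    {M' N' : Matrix (Fin n) (Fin n) ℝ} (hN' : (1 - M') * N' = 1) (X : Matrix (Fin n) (Fin n) ℝ) :
    X - ((1 + M) * N)ᵀ * X * ((1 + M') * N') = -(2 • (Nᵀ * (Mᵀ * X + X * M') * N')) := by
  have hX : X = ((1 - M) * N)ᵀ * X * ((1 - M') * N') := by simp [hN, hN']
  nth_rewrite 1 [hX]
  simp only [transpose_mul, transpose_sub, transpose_add, transpose_one]
  noncomm_ring

theorem sylvester_eq_zero {n : ℕ} {M M' : Matrix (Fin n) (Fin n) ℝ} (hM : IsHurwitz M)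
    (hM' : IsHurwitz M') {X : Matrix (Fin n) (Fin n) ℝ} (hX : Mᵀ * X + X * M' = 0) : X = 0 := by
  obtain ⟨F, N, hF, hN, hlim⟩ := hM.exists_cayley
  obtain ⟨F', N', hF', hN', hlim'⟩ := hM'.exists_cayley
  have h := sylvester_stein hN hN' X
  rw [hX, ← hF, ← hF'] at h
  have h1 : X = Fᵀ * X * F' := by simpa [sub_eq_zero] using h
  have hk : ∀ k : ℕ, (F ^ k)ᵀ * X * F' ^ k = X := by
    intro k
    induction k with
    | zero => simp
    | succ k ih =>
      rw [pow_succ' F', pow_succ' F, transpose_mul]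
      calc _ = (F ^ k)ᵀ * (Fᵀ * X * F') * F' ^ k := by noncomm_ring
        _ = X := by rw [← h1, ih]
  have hl : Tendsto (fun k : ℕ => (F ^ k)ᵀ * X * F' ^ k) atTop (𝓝 (0ᵀ * X * 0)) :=
    (((continuous_id.matrix_transpose.tendsto _).comp hlim).mul tendsto_const_nhds).mul hlim'
  simp only [hk, mul_zero] at hl
  exact tendsto_nhds_unique tendsto_const_nhds hl

theorem exists_lyapunov {n : ℕ} {M : Matrix (Fin n) (Fin n) ℝ} (hM : IsHurwitz M)
    (S : Matrix (Fin n) (Fin n) ℝ) : ∃ X, Mᵀ * X + X * M + S = 0 := by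
  let L : Matrix (Fin n) (Fin n) ℝ →ₗ[ℝ] Matrix (Fin n) (Fin n) ℝ :=
    LinearMap.mulLeft ℝ Mᵀ + LinearMap.mulRight ℝ M
  have hL : Function.Injective L :=
    (injective_iff_map_eq_zero L).2 fun X hX => sylvester_eq_zero hM hM hX
  obtain ⟨X, hX⟩ := LinearMap.surjective_of_injective hL (-S)
  exact ⟨X, add_eq_zero_iff_eq_neg.2 hX⟩

/-- With `F` the Cayley transform of `M`, `X ⪰ (F ^ k)ᵀ X F ^ k` for all `k`, and the right side
tends to `0`. -/
theorem posSemidef_of_lyapunov {n : ℕ} {M : Matrix (Fin n) (Fin n) ℝ} (hM : IsHurwitz M)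
    {S X : Matrix (Fin n) (Fin n) ℝ} (hS : S.PosSemidef) (hX : Mᵀ * X + X * M + S = 0) :
    X.PosSemidef := by
  have hSt : Sᵀ = S := hS.1
  have hXt : Xᵀ = X := by
    rw [← sub_eq_zero]
    apply sylvester_eq_zero hM hM
    have h := congrArg Matrix.transpose hX
    simp only [transpose_add, transpose_mul, transpose_transpose, hSt, transpose_zero] at h
    calc _ = (Xᵀ * M + Mᵀ * Xᵀ + S) - (Mᵀ * X + X * M + S) := by noncomm_ring
      _ = 0 := by rw [h, hX, sub_zero]
  refine .of_dotProduct_mulVec_nonneg hXt fun v => ?_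
  obtain ⟨F, N, hF, hN, hlim⟩ := hM.exists_cayley
  have h := sylvester_stein hN hN X
  rw [add_eq_zero_iff_eq_neg.1 hX, ← hF] at h
  have hP : (X - Fᵀ * X * F).PosSemidef := by
    rw [h]
    convert (hS.conjTranspose_mul_mul_same N).add (hS.conjTranspose_mul_mul_same N) using 1
    rw [conjTranspose_eq_transpose_of_trivial]
    noncomm_ring
  have hk : ∀ k : ℕ, star v ⬝ᵥ (((F ^ k)ᵀ * X * F ^ k) *ᵥ v) ≤ star v ⬝ᵥ (X *ᵥ v) := by
    intro k
    induction k with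
    | zero => simp
    | succ k ih =>
      refine le_trans ?_ ih
      have h2 := (hP.conjTranspose_mul_mul_same (F ^ k)).dotProduct_mulVec_nonneg v
      have h3 : (F ^ k)ᴴ * (X - Fᵀ * X * F) * F ^ k =
          (F ^ k)ᵀ * X * F ^ k - (F ^ (k + 1))ᵀ * X * F ^ (k + 1) := by
        rw [conjTranspose_eq_transpose_of_trivial, pow_succ' F, transpose_mul]
        noncomm_ring
      rw [h3, sub_mulVec, dotProduct_sub] at h2
      linarith
  have hl : Tendsto (fun k : ℕ => (F ^ k)ᵀ * X * F ^ k) atTop (𝓝 (0ᵀ * X * 0)) :=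
    (((continuous_id.matrix_transpose.tendsto _).comp hlim).mul tendsto_const_nhds).mul hlim
  have hc : Continuous fun P : Matrix (Fin n) (Fin n) ℝ => star v ⬝ᵥ (P *ᵥ v) := by fun_prop
  have hl2 := (hc.tendsto _).comp hl
  simp only [mul_zero, zero_mulVec, dotProduct_zero] at hl2
  exact le_of_tendsto' hl2 hk

/-! ### Detectability and closed loops -/

/-- Unobservable modes of a detectable pair are stable: `x + i y` is an eigenvector of `A` in the
kernel of `C`, with eigenvalue `a + i b`. -/
theorem IsDetectable.neg_of_unobservable {n p : ℕ} {A : Matrix (Fin n) (Fin n) ℝ}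
    {C : Matrix (Fin p) (Fin n) ℝ} (h : IsDetectable A C) {a b : ℝ} {x y : Fin n → ℝ}
    (hxy : x ≠ 0 ∨ y ≠ 0) (hx : A *ᵥ x = a • x - b • y) (hy : A *ᵥ y = b • x + a • y)
    (hCx : C *ᵥ x = 0) (hCy : C *ᵥ y = 0) : a < 0 := by
  obtain ⟨K, hK⟩ := h
  have hK' := hK.transpose
  simp only [transpose_add, transpose_mul, transpose_transpose] at hK'
  refine (isHurwitz_iff_real _).1 hK' a b x y hxy ?_ ?_
  · rw [add_mulVec, ← mulVec_mulVec, hCx, mulVec_zero, add_zero, hx]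
  · rw [add_mulVec, ← mulVec_mulVec, hCy, mulVec_zero, add_zero, hy]

/-- An eigenvector of `A + B K` with `Re ≥ 0` has, by the Lyapunov identity, zero cost; hence it is
annihilated by `Qhalf` and `K`, and is an unobservable unstable mode of `A`. -/
theorem isHurwitz_closedLoop {n m : ℕ} {A : Matrix (Fin n) (Fin n) ℝ}
    {B : Matrix (Fin n) (Fin m) ℝ} {Qhalf P X : Matrix (Fin n) (Fin n) ℝ}
    {R : Matrix (Fin m) (Fin m) ℝ} (hQhalf : Qhalf.PosSemidef) (hR : R.PosDef)
    (hdet : IsDetectable A Qhalf) (hP : P.PosSemidef) (hX : X.PosSemidef)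
    {K : Matrix (Fin m) (Fin n) ℝ}
    (h : (A + B * K)ᵀ * X + X * (A + B * K) + Qhalf * Qhalf + Kᵀ * R * K + P = 0) :
    IsHurwitz (A + B * K) := by
  rw [isHurwitz_iff_real]
  intro a b x y hxy hx hy
  by_contra! ha
  have hXt : Xᵀ = X := hX.1
  have hQt : Qhalfᵀ = Qhalf := hQhalf.1
  have hform : ∀ z : Fin n → ℝ, 2 * ((X *ᵥ z) ⬝ᵥ ((A + B * K) *ᵥ z)) +
      (Qhalf *ᵥ z) ⬝ᵥ (Qhalf *ᵥ z) + (K *ᵥ z) ⬝ᵥ (R *ᵥ (K *ᵥ z)) + z ⬝ᵥ (P *ᵥ z) = 0 := by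
    intro z
    have h1 := congrArg (fun T => z ⬝ᵥ (T *ᵥ z)) h
    simp only [add_mulVec, dotProduct_add, ← mulVec_mulVec, zero_mulVec, dotProduct_zero] at h1 ⊢
    have e1 : ∀ w, z ⬝ᵥ (X *ᵥ w) = (X *ᵥ z) ⬝ᵥ w := fun w => by
      rw [dotProduct_mulVec, ← mulVec_transpose, hXt]
    have e2 : z ⬝ᵥ (Qhalf *ᵥ (Qhalf *ᵥ z)) = (Qhalf *ᵥ z) ⬝ᵥ (Qhalf *ᵥ z) := by
      rw [dotProduct_mulVec, ← mulVec_transpose, hQt]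
    have e3 : z ⬝ᵥ (Kᵀ *ᵥ (R *ᵥ (K *ᵥ z))) = (K *ᵥ z) ⬝ᵥ (R *ᵥ (K *ᵥ z)) := by
      rw [dotProduct_mulVec, vecMul_transpose]
    have e4 : z ⬝ᵥ ((A + B * K)ᵀ *ᵥ (X *ᵥ z)) =
        (X *ᵥ z) ⬝ᵥ (A *ᵥ z) + (X *ᵥ z) ⬝ᵥ (B *ᵥ (K *ᵥ z)) := by
      rw [dotProduct_mulVec, vecMul_transpose, add_mulVec, ← mulVec_mulVec, dotProduct_comm,
        dotProduct_add]
    rw [e1, dotProduct_add, e2, e3, e4] at h1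
    linarith
  have hRn : ∀ z : Fin n → ℝ, 0 ≤ (K *ᵥ z) ⬝ᵥ (R *ᵥ (K *ᵥ z)) := fun z => by
    simpa using hR.posSemidef.dotProduct_mulVec_nonneg (K *ᵥ z)
  have hPn : ∀ z : Fin n → ℝ, 0 ≤ z ⬝ᵥ (P *ᵥ z) := fun z => by
    simpa using hP.dotProduct_mulVec_nonneg z
  have hXn : ∀ z : Fin n → ℝ, 0 ≤ (X *ᵥ z) ⬝ᵥ z := fun z => by
    simpa [dotProduct_comm] using hX.dotProduct_mulVec_nonneg z
  have hQn : ∀ z : Fin n → ℝ, 0 ≤ (Qhalf *ᵥ z) ⬝ᵥ (Qhalf *ᵥ z) := fun z => by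
    simpa using dotProduct_star_self_nonneg (Qhalf *ᵥ z)
  have hX2 : (X *ᵥ x) ⬝ᵥ y = (X *ᵥ y) ⬝ᵥ x := by
    rw [dotProduct_comm (X *ᵥ y), dotProduct_mulVec, ← mulVec_transpose, hXt]
  -- In the sum of the forms at `x` and `y` the terms with `b` cancel, leaving
  -- `2 a (xᵀ X x + yᵀ X y)` plus nonnegative terms equal to `0`.
  have fx := hform x
  have fy := hform y
  rw [hx, dotProduct_sub, dotProduct_smul, dotProduct_smul, smul_eq_mul, smul_eq_mul, hX2] at fx
  rw [hy, dotProduct_add, dotProduct_smul, dotProduct_smul, smul_eq_mul, smul_eq_mul] at fy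
  have n1 := mul_nonneg ha (hXn x)
  have n2 := mul_nonneg ha (hXn y)
  have n3 := hRn x
  have n4 := hRn y
  have n5 := hPn x
  have n6 := hPn y
  have n7 := hQn x
  have n8 := hQn y
  have hQx : Qhalf *ᵥ x = 0 := dotProduct_self_eq_zero.1 (by linarith)
  have hQy : Qhalf *ᵥ y = 0 := dotProduct_self_eq_zero.1 (by linarith)
  have hK : ∀ z : Fin n → ℝ, (K *ᵥ z) ⬝ᵥ (R *ᵥ (K *ᵥ z)) = 0 → K *ᵥ z = 0 := by
    intro z hz
    by_contra hne
    have := hR.dotProduct_mulVec_pos hne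
    rw [star_trivial] at this
    linarith
  have hKx : K *ᵥ x = 0 := hK x (by linarith)
  have hKy : K *ᵥ y = 0 := hK y (by linarith)
  rw [add_mulVec, ← mulVec_mulVec, hKx, mulVec_zero, add_zero] at hx
  rw [add_mulVec, ← mulVec_mulVec, hKy, mulVec_zero, add_zero] at hy
  exact absurd (hdet.neg_of_unobservable hxy hx hy hQx hQy) (not_lt.2 ha)

/-- Completing the square: the Lyapunov equation of the gain `K` rewritten for the improved gain
`K' = -R⁻¹ Bᵀ X`, which enters through `h1` and `h2`. -/
theorem lyapunov_cost_change_gain {n m : ℕ} {A Q X : Matrix (Fin n) (Fin n) ℝ}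
    {B : Matrix (Fin n) (Fin m) ℝ} {R : Matrix (Fin m) (Fin m) ℝ}
    {K K' : Matrix (Fin m) (Fin n) ℝ} (h1 : Bᵀ * X = -(R * K')) (h2 : X * B = -(K'ᵀ * R))
    (h : (A + B * K)ᵀ * X + X * (A + B * K) + Q + Kᵀ * R * K = 0) :
    (A + B * K')ᵀ * X + X * (A + B * K') + Q + K'ᵀ * R * K' + (K - K')ᵀ * R * (K - K') = 0 := by
  rw [← h]
  simp only [transpose_add, transpose_sub, transpose_mul, Matrix.add_mul, Matrix.mul_add,
    Matrix.sub_mul, Matrix.mul_sub, ← Matrix.mul_assoc, h2]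
  simp only [Matrix.mul_assoc, h1, Matrix.mul_neg, Matrix.neg_mul]
  abel

/-! ### Kleinman's iteration -/

/-- A decreasing sequence of positive semidefinite matrices converges: its quadratic forms do, and
the entries are recovered by polarization. -/
theorem exists_tendsto_of_antitone {n : ℕ} {X : ℕ → Matrix (Fin n) (Fin n) ℝ}
    (hX : ∀ k, (X k).PosSemidef) (hanti : ∀ k, (X k - X (k + 1)).PosSemidef) :
    ∃ Y : Matrix (Fin n) (Fin n) ℝ, Y.PosSemidef ∧ Tendsto X atTop (𝓝 Y) := by
  have hq : ∀ v : Fin n → ℝ, ∃ c, Tendsto (fun k => v ⬝ᵥ (X k *ᵥ v)) atTop (𝓝 c) := by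
    intro v
    refine ⟨_, tendsto_atTop_ciInf (antitone_nat_of_succ_le fun k => ?_) ⟨0, ?_⟩⟩
    · have := (hanti k).dotProduct_mulVec_nonneg v
      rw [star_trivial, sub_mulVec, dotProduct_sub] at this
      linarith
    · rintro _ ⟨k, rfl⟩
      simpa using (hX k).dotProduct_mulVec_nonneg v
  choose c hc using hq
  have hent : ∀ i j, Tendsto (fun k => X k i j) atTop (𝓝 ((c (Pi.single i 1 + Pi.single j 1) -
      c (Pi.single i 1) - c (Pi.single j 1)) / 2)) := by
    intro i j
    refine ((((hc (Pi.single i 1 + Pi.single j 1)).sub (hc (Pi.single i 1))).sub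
      (hc (Pi.single j 1))).div_const 2).congr fun k => ?_
    have hs : X k j i = X k i j := by simpa using (hX k).1.apply i j
    simp [mulVec_add, hs]
    ring
  have hlim : Tendsto X atTop (𝓝 (Matrix.of fun i j => (c (Pi.single i 1 + Pi.single j 1) -
      c (Pi.single i 1) - c (Pi.single j 1)) / 2)) :=
    tendsto_pi_nhds.2 fun i => tendsto_pi_nhds.2 fun j => hent i j
  refine ⟨_, .of_dotProduct_mulVec_nonneg ?_ fun v => ?_, hlim⟩
  · refine tendsto_nhds_unique ((continuous_id.matrix_conjTranspose.tendsto _).comp hlim)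
      (hlim.congr fun k => (hX k).1.symm)
  · have hcont : Continuous fun P : Matrix (Fin n) (Fin n) ℝ => star v ⬝ᵥ (P *ᵥ v) := by fun_prop
    exact ge_of_tendsto' ((hcont.tendsto _).comp hlim) fun k =>
      (hX k).dotProduct_mulVec_nonneg v

/-- `K` is a stabilizing gain and `X` is its cost matrix for the linear-quadratic problem, that is,
`xᵀ X x` is the integral of `zᵀ Q z + uᵀ R u` along `z' = A z + B u`, `u = K z`, `z 0 = x`; encoded by
the Lyapunov equation. -/
def IsFeedbackCost {n m : ℕ} (A : Matrix (Fin n) (Fin n) ℝ) (B : Matrix (Fin n) (Fin m) ℝ)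
    (Q : Matrix (Fin n) (Fin n) ℝ) (R : Matrix (Fin m) (Fin m) ℝ)
    (K : Matrix (Fin m) (Fin n) ℝ) (X : Matrix (Fin n) (Fin n) ℝ) : Prop :=
  IsHurwitz (A + B * K) ∧ X.PosSemidef ∧
    (A + B * K)ᵀ * X + X * (A + B * K) + Q + Kᵀ * R * K = 0

theorem exists_isFeedbackCost {n m : ℕ} {A Q : Matrix (Fin n) (Fin n) ℝ}
    {B : Matrix (Fin n) (Fin m) ℝ} {R : Matrix (Fin m) (Fin m) ℝ}
    {K : Matrix (Fin m) (Fin n) ℝ} (hQ : Q.PosSemidef) (hR : R.PosDef)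
    (hK : IsHurwitz (A + B * K)) : ∃ X, IsFeedbackCost A B Q R K X := by
  obtain ⟨X, hX⟩ := exists_lyapunov hK (Q + Kᵀ * R * K)
  have hS : (Q + Kᵀ * R * K).PosSemidef := hQ.add (hR.posSemidef.conjTranspose_mul_mul_same K)
  exact ⟨X, hK, posSemidef_of_lyapunov hK hS hX, by rw [← hX]; abel⟩

/-- The relations `Bᵀ X = -R K'` and `X B = -K'ᵀ R` for the improved gain `K' = -R⁻¹ Bᵀ X`. -/
theorem gain_identities {n m : ℕ} {X : Matrix (Fin n) (Fin n) ℝ}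
    (B : Matrix (Fin n) (Fin m) ℝ) {R : Matrix (Fin m) (Fin m) ℝ} (hX : X.PosSemidef)
    (hR : R.PosDef) : Bᵀ * X = -(R * -(R⁻¹ * Bᵀ * X)) ∧ X * B = -((-(R⁻¹ * Bᵀ * X))ᵀ * R) := by
  have hu : IsUnit R.det := (Matrix.isUnit_iff_isUnit_det R).1 hR.isUnit
  have hXt : Xᵀ = X := hX.1
  have hRt : R⁻¹ᵀ = R⁻¹ := hR.inv.1
  constructor
  · rw [Matrix.mul_neg, neg_neg, Matrix.mul_assoc, Matrix.mul_nonsing_inv_cancel_left _ _ hu]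
  · rw [transpose_neg, Matrix.neg_mul, neg_neg, transpose_mul, transpose_mul, hXt, hRt,
      transpose_transpose, ← Matrix.mul_assoc, Matrix.nonsing_inv_mul_cancel_right _ _ hu]

/-- One step of the iteration: the improved gain is stabilizing and its cost is at most `X`. -/
theorem exists_kleinman_step {n m : ℕ} {A Qhalf X : Matrix (Fin n) (Fin n) ℝ}
    {B : Matrix (Fin n) (Fin m) ℝ} {R : Matrix (Fin m) (Fin m) ℝ}
    {K : Matrix (Fin m) (Fin n) ℝ} (hQhalf : Qhalf.PosSemidef) (hQ : (Qhalf * Qhalf).PosSemidef)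
    (hR : R.PosDef) (hdet : IsDetectable A Qhalf)
    (h : IsFeedbackCost A B (Qhalf * Qhalf) R K X) :
    ∃ X', IsFeedbackCost A B (Qhalf * Qhalf) R (-(R⁻¹ * Bᵀ * X)) X' ∧ (X - X').PosSemidef := by
  obtain ⟨-, hX, hEq⟩ := h
  obtain ⟨h1, h2⟩ := gain_identities B hX hR
  have hnew := lyapunov_cost_change_gain h1 h2 hEq
  generalize -(R⁻¹ * Bᵀ * X) = K' at *
  have hP : ((K - K')ᵀ * R * (K - K')).PosSemidef :=
    hR.posSemidef.conjTranspose_mul_mul_same (K - K')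
  have hK' := isHurwitz_closedLoop hQhalf hR hdet hP hX hnew
  obtain ⟨X', hX'⟩ := exists_isFeedbackCost hQ hR hK'
  refine ⟨X', hX', posSemidef_of_lyapunov hK' hP ?_⟩
  calc _ = ((A + B * K')ᵀ * X + X * (A + B * K') + Qhalf * Qhalf + K'ᵀ * R * K' +
        (K - K')ᵀ * R * (K - K')) -
        ((A + B * K')ᵀ * X' + X' * (A + B * K') + Qhalf * Qhalf + K'ᵀ * R * K') := by
        rw [Matrix.mul_sub, Matrix.sub_mul]; abel
    _ = 0 := by rw [hnew, hX'.2.2, sub_zero]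

/-- if `(A,B)` is stabilizable and `(A, Q^{1/2})` is detectable, the algebraic
Riccati equation `AᵀX + XA + Q − XBR⁻¹BᵀX = 0` has a unique symmetric positive semidefinite
stabilizing solution. -/
theorem riccati_exists_unique_stabilizing_solution {n m : ℕ}
    (A : Matrix (Fin n) (Fin n) ℝ) (B : Matrix (Fin n) (Fin m) ℝ)
    (Q Qhalf : Matrix (Fin n) (Fin n) ℝ) (R : Matrix (Fin m) (Fin m) ℝ)
    (hQ : Q.PosSemidef) (hQhalf : Qhalf.PosSemidef) (hQsq : Qhalf * Qhalf = Q)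
    (hR : R.PosDef)
    (hstab : IsStabilizable A B) (hdet : IsDetectable A Qhalf) :
    ∃! X : Matrix (Fin n) (Fin n) ℝ,
      X.PosSemidef ∧
      Aᵀ * X + X * A + Q - X * B * R⁻¹ * Bᵀ * X = 0 ∧
      IsHurwitz (A - B * R⁻¹ * Bᵀ * X) := by
  subst hQsq
  have hgain : ∀ X, A + B * -(R⁻¹ * Bᵀ * X) = A - B * R⁻¹ * Bᵀ * X := fun X => by
    simp only [Matrix.mul_neg, ← Matrix.mul_assoc, sub_eq_add_neg]
  apply existsUnique_of_exists_of_unique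
  · obtain ⟨K₀, hK₀⟩ := hstab
    obtain ⟨X₀, hX₀⟩ := exists_isFeedbackCost hQ hR hK₀
    choose f hf hanti using fun Z : {X // ∃ K, IsFeedbackCost A B (Qhalf * Qhalf) R K X} =>
      exists_kleinman_step hQhalf hQ hR hdet Z.2.choose_spec
    let g : {X // ∃ K, IsFeedbackCost A B (Qhalf * Qhalf) R K X} →
        {X // ∃ K, IsFeedbackCost A B (Qhalf * Qhalf) R K X} := fun Z => ⟨f Z, _, hf Z⟩
    let Z : ℕ → {X // ∃ K, IsFeedbackCost A B (Qhalf * Qhalf) R K X} :=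
      fun k => g^[k] ⟨X₀, K₀, hX₀⟩
    have hZ : ∀ k, (Z (k + 1)).1 = f (Z k) := fun k => by
      simp only [Z, Function.iterate_succ_apply']; rfl
    obtain ⟨X, hX, hlim⟩ := exists_tendsto_of_antitone (X := fun k => (Z k).1)
      (fun k => (Z k).2.choose_spec.2.1) (fun k => by rw [hZ]; exact hanti (Z k))
    have hlim' := hlim.comp (tendsto_add_atTop_nat 1)
    have hEq : (A + B * -(R⁻¹ * Bᵀ * X))ᵀ * X + X * (A + B * -(R⁻¹ * Bᵀ * X)) + Qhalf * Qhalf +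
        (-(R⁻¹ * Bᵀ * X))ᵀ * R * -(R⁻¹ * Bᵀ * X) = 0 := by
      have hcont : Continuous fun P : Matrix (Fin n) (Fin n) ℝ × Matrix (Fin n) (Fin n) ℝ =>
          (A + B * -(R⁻¹ * Bᵀ * P.1))ᵀ * P.2 + P.2 * (A + B * -(R⁻¹ * Bᵀ * P.1)) +
          Qhalf * Qhalf + (-(R⁻¹ * Bᵀ * P.1))ᵀ * R * -(R⁻¹ * Bᵀ * P.1) := by fun_prop
      refine tendsto_nhds_unique ((hcont.tendsto (X, X)).comp (hlim.prodMk_nhds hlim'))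
        (tendsto_const_nhds.congr fun k => ?_)
      have := (hf (Z k)).2.2
      rw [← hZ] at this
      exact this.symm
    refine ⟨X, hX, ?_, ?_⟩
    · obtain ⟨h1, h2⟩ := gain_identities B hX hR
      rw [← hEq]
      have e1 : X * B * R⁻¹ * Bᵀ * X = -(X * B * -(R⁻¹ * Bᵀ * X)) := by
        simp only [Matrix.mul_neg, neg_neg, ← Matrix.mul_assoc]
      rw [e1]
      generalize -(R⁻¹ * Bᵀ * X) = K at *
      simp only [transpose_add, transpose_mul, Matrix.add_mul, Matrix.mul_add,
        ← Matrix.mul_assoc, h2]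
      simp only [Matrix.mul_assoc, h1, Matrix.mul_neg, Matrix.neg_mul]
      abel
    · rw [← hgain]
      refine isHurwitz_closedLoop hQhalf hR hdet Matrix.PosSemidef.zero hX ?_
      rw [hEq, add_zero]
  · rintro X Y ⟨hX, hXeq, hXH⟩ ⟨hY, hYeq, hYH⟩
    rw [← sub_eq_zero]
    apply sylvester_eq_zero hXH hYH
    have hXt : Xᵀ = X := hX.1
    have hRt : R⁻¹ᵀ = R⁻¹ := hR.inv.1
    calc _ = (Aᵀ * X + X * A + Qhalf * Qhalf - X * B * R⁻¹ * Bᵀ * X) -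
          (Aᵀ * Y + Y * A + Qhalf * Qhalf - Y * B * R⁻¹ * Bᵀ * Y) := by
          simp only [transpose_sub, transpose_mul, transpose_transpose, hXt, hRt,
            Matrix.sub_mul, Matrix.mul_sub, Matrix.mul_assoc]
          abel
      _ = 0 := by rw [hXeq, hYeq, sub_zero]
end

section
/- Let A ∈ ℝ^{n×n}, B ∈ ℝ^{n×q}, and let n₁ = dim Im(A|B). Let U ∈ ℝ^{n×n} be any invertible matrix whose first n₁ columns form a basis of Im(A|B). Then U⁻¹AU and U⁻¹B are block upper triangular with respect to the partition {1,…,n₁} ∪ {n₁+1,…,n}: that is, (U⁻¹AU)_{ij} = 0 whenever i > n₁ and j ≤ n₁, and (U⁻¹B)_{ij} = 0 whenever i > n₁. In block notation, U⁻¹AU = [[A₁, A₂],[0, A₃]] with A₁ ∈ ℝ^{n₁×n₁}, and U⁻¹B = [[B₁],[0]] with B₁ ∈ ℝ^{n₁×q}. -/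
/-!
By Cayley–Hamilton every power of `A` is a combination of `1, A, …, A ^ (n - 1)`, so
`ctrlSpan A B` contains `A ^ k * B * x` for *all* `k`, and hence is invariant under `A`
(`mulVec_mem_ctrlSpan`); it also contains the columns of `B`. On the other hand `U⁻¹` sends the
`j`-th column of `U` to the `j`-th standard basis vector, so it sends the span of the first `n₁`
columns into the vectors whose coordinates of index `≥ n₁` vanish. The columns of `U⁻¹ A U` with
index `< n₁` and all the columns of `U⁻¹ B` are images under `U⁻¹` of vectors of `ctrlSpan A B`.
-/

open Matrix

/-- `Im(A|B) = Im(B) + A·Im(B) + ⋯ + A^{n−1}·Im(B) ⊆ ℝⁿ`. -/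
def ctrlSpan {n q : ℕ} (A : Matrix (Fin n) (Fin n) ℝ) (B : Matrix (Fin n) (Fin q) ℝ) :
    Submodule ℝ (Fin n → ℝ) :=
  ⨆ i : Fin n, Submodule.map (Matrix.mulVecLin (A ^ (i : ℕ)))
    (LinearMap.range (Matrix.mulVecLin B))

/-- Powers of exponent `≥ n` contribute nothing new, by Cayley–Hamilton. -/
theorem pow_mulVec_mem_ctrlSpan {n q : ℕ}
    (A : Matrix (Fin n) (Fin n) ℝ) (B : Matrix (Fin n) (Fin q) ℝ) (k : ℕ) (x : Fin q → ℝ) :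
    (A ^ k) *ᵥ (B *ᵥ x) ∈ ctrlSpan A B := by
  -- For `n = 0` the characteristic polynomial is `1`, and the degree bound below fails.
  rcases Nat.eq_zero_or_pos n with rfl | hn
  · rw [Subsingleton.elim ((A ^ k) *ᵥ (B *ᵥ x)) 0]
    exact zero_mem _
  have hdeg : (Polynomial.X ^ k %ₘ A.charpoly).natDegree < n := by
    have hA : A.charpoly.natDegree = n := by simp [Matrix.charpoly_natDegree_eq_dim]
    have h := Polynomial.natDegree_modByMonic_lt (Polynomial.X ^ k) A.charpoly_monic
      (fun h1 => by rw [h1, Polynomial.natDegree_one] at hA; omega)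
    rwa [hA] at h
  rw [Matrix.pow_eq_aeval_mod_charpoly, Polynomial.aeval_eq_sum_range' hdeg, Matrix.sum_mulVec]
  refine Submodule.sum_mem _ fun i hi => ?_
  rw [Matrix.smul_mulVec]
  refine Submodule.smul_mem _ _ ?_
  exact Submodule.mem_iSup_of_mem (⟨i, Finset.mem_range.mp hi⟩ : Fin n)
    (Submodule.mem_map_of_mem (f := Matrix.mulVecLin (A ^ i)) ⟨x, rfl⟩)

theorem mulVec_mem_ctrlSpan {n q : ℕ}
    (A : Matrix (Fin n) (Fin n) ℝ) (B : Matrix (Fin n) (Fin q) ℝ) {v : Fin n → ℝ}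
    (hv : v ∈ ctrlSpan A B) : A *ᵥ v ∈ ctrlSpan A B := by
  suffices h : ctrlSpan A B ≤ (ctrlSpan A B).comap A.mulVecLin from h hv
  refine iSup_le fun i => ?_
  rintro _ ⟨_, ⟨x, rfl⟩, rfl⟩
  simpa [pow_succ', Matrix.mulVec_mulVec, Matrix.mul_assoc] using
    pow_mulVec_mem_ctrlSpan A B (i + 1) x

/-- if `U` is invertible and its first `n₁ = dim Im(A|B)` columns form a basis
of `Im(A|B)`, then `U⁻¹AU` and `U⁻¹B` are block upper triangular with respect to the
partition `{1,…,n₁} ∪ {n₁+1,…,n}`. -/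
theorem block_triangular_of_basis_ctrlSpan {n q : ℕ}
    (A : Matrix (Fin n) (Fin n) ℝ) (B : Matrix (Fin n) (Fin q) ℝ)
    (n₁ : ℕ) (hn₁ : n₁ = Module.finrank ℝ (ctrlSpan A B))
    (U : Matrix (Fin n) (Fin n) ℝ) (hU : IsUnit U)
    (hspan : Submodule.span ℝ
        {v : Fin n → ℝ | ∃ j : Fin n, (j : ℕ) < n₁ ∧ v = fun i => U i j} = ctrlSpan A B) :
    (∀ i j : Fin n, n₁ ≤ (i : ℕ) → (j : ℕ) < n₁ → (U⁻¹ * A * U) i j = 0) ∧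
    (∀ (i : Fin n) (j : Fin q), n₁ ≤ (i : ℕ) → (U⁻¹ * B) i j = 0) := by
  have hdet : IsUnit U.det := (Matrix.isUnit_iff_isUnit_det U).mp hU
  have key : ∀ v ∈ ctrlSpan A B, ∀ i : Fin n, n₁ ≤ (i : ℕ) → (U⁻¹ *ᵥ v) i = 0 := by
    intro v hv i hi
    rw [← hspan] at hv
    induction hv using Submodule.span_induction with
    | mem v hv =>
      obtain ⟨j, hj, rfl⟩ := hv
      have hij : i ≠ j := by rintro rfl; omega
      -- The left-hand side is the `(i, j)` entry of `U⁻¹ * U`, by definition.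
      change (U⁻¹ * U) i j = 0
      rw [Matrix.nonsing_inv_mul U hdet, Matrix.one_apply_ne hij]
    | zero => simp
    | add v w _ _ hv hw => simp [Matrix.mulVec_add, hv, hw]
    | smul c v _ hv => simp [Matrix.mulVec_smul, hv]
  refine ⟨fun i j hi hj => ?_, fun i j hi => ?_⟩
  · have hcol : (fun k => U k j) ∈ ctrlSpan A B :=
      hspan ▸ Submodule.subset_span ⟨j, hj, rfl⟩
    rw [Matrix.mul_assoc]
    exact key _ (mulVec_mem_ctrlSpan A B hcol) i hi
  · have hcol : B *ᵥ Pi.single j 1 ∈ ctrlSpan A B := by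
      simpa using pow_mulVec_mem_ctrlSpan A B 0 (Pi.single j 1)
    have h := key _ hcol i hi
    rwa [Matrix.mulVec_mulVec, Matrix.mulVec_single_one] at h
end

section
/- Let d ∈ ℕ, let a : [0,∞) → [0,∞) and φ : [0,∞) → ℝ^d be continuous, and let P₀ ∈ ℝ^{d×d} be symmetric positive definite. For t ≥ 0 define M(t) = P₀⁻¹ + ∫₀ᵗ a(s) φ(s) φ(s)ᵀ ds. Then M(t) is symmetric positive definite (hence invertible) for every t ≥ 0, and P(t) := M(t)⁻¹ satisfies P(0) = P₀ and is differentiable in t with P′(t) = −a(t) P(t) φ(t) φ(t)ᵀ P(t) for all t ≥ 0. -/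
open Matrix

/-!
The information matrix `M(t) = P₀⁻¹ + ∫₀ᵗ a φφᵀ` is positive definite because its integral part has
quadratic form `x ↦ ∫₀ᵗ a(s) (φ(s) ⬝ x)² ds ≥ 0` (`posSemidef_gram`). By the fundamental theorem of
calculus `M` has derivative `a(t) φ(t)φ(t)ᵀ` (`hasDerivWithinAt_integral_Ici`), and the derivative
of the inverse in the Banach algebra of matrices, `(M⁻¹)' = -M⁻¹ M' M⁻¹`
(`hasDerivWithinAt_matrix_inv`), gives the differential equation.
-/

/-- One-sided fundamental theorem of calculus on `[0, ∞)`. Nothing is assumed about `f` on the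
negative half-line, so `f` is replaced by its continuous extension `s ↦ f (max s 0)`. -/
lemma hasDerivWithinAt_integral_Ici {f : ℝ → ℝ} (hf : ContinuousOn f (Set.Ici 0))
    {t : ℝ} (ht : 0 ≤ t) :
    HasDerivWithinAt (fun τ => ∫ s in (0:ℝ)..τ, f s) (f t) (Set.Ici 0) t := by
  have hg : Continuous fun s : ℝ => f (max s 0) :=
    hf.comp_continuous (by fun_prop) fun s => le_max_right s 0
  have hcongr : ∀ τ ∈ Set.Ici (0:ℝ), ∫ s in (0:ℝ)..τ, f s = ∫ s in (0:ℝ)..τ, f (max s 0) := by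
    intro τ hτ
    refine intervalIntegral.integral_congr fun s hs => ?_
    rw [Set.uIcc_of_le hτ] at hs
    simp [max_eq_left hs.1]
  have h := (hg.integral_hasStrictDerivAt 0 t).hasDerivAt.hasDerivWithinAt (s := Set.Ici 0)
  simp only [max_eq_left ht] at h
  exact h.congr hcongr (hcongr t ht)

section
attribute [local instance] Matrix.linftyOpNormedRing Matrix.linftyOpNormedAlgebra

/-- Entrywise derivative of a matrix inverse. The proof uses the `ℓ^∞` operator norm, for which
matrices form a Banach algebra whose topology is the entrywise one. -/
lemma hasDerivWithinAt_matrix_inv {d : ℕ} {M : ℝ → Matrix (Fin d) (Fin d) ℝ}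
    {M' : Matrix (Fin d) (Fin d) ℝ} {s : Set ℝ} {t : ℝ}
    (h : ∀ i j, HasDerivWithinAt (fun τ => M τ i j) (M' i j) s t) (hu : IsUnit (M t))
    (i j : Fin d) :
    HasDerivWithinAt (fun τ => (M τ)⁻¹ i j) (-((M t)⁻¹ * M' * (M t)⁻¹) i j) s t := by
  have : CompleteSpace (Matrix (Fin d) (Fin d) ℝ) := FiniteDimensional.complete ℝ _
  have hM : HasDerivWithinAt M M' s t := by
    let e : (Fin d → Fin d → ℝ) →L[ℝ] Matrix (Fin d) (Fin d) ℝ :=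
      LinearMap.toContinuousLinearMap (Matrix.ofLinearEquiv ℝ).toLinearMap
    have h0 : HasDerivWithinAt (fun τ i j => M τ i j) (fun i j => M' i j) s t :=
      hasDerivWithinAt_pi.2 fun i => hasDerivWithinAt_pi.2 fun j => h i j
    exact e.hasFDerivAt.comp_hasDerivWithinAt t h0
  obtain ⟨u, hu⟩ := hu
  have hinv := hasFDerivAt_ringInverse (𝕜 := ℝ) u
  rw [hu] at hinv
  have h1 := hinv.comp_hasDerivWithinAt t hM
  let ev : Matrix (Fin d) (Fin d) ℝ →L[ℝ] ℝ :=
    LinearMap.toContinuousLinearMap (Matrix.entryLinearMap ℝ ℝ i j)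
  have h2 := ev.hasFDerivAt.comp_hasDerivWithinAt t h1
  have hui : (↑u⁻¹ : Matrix (Fin d) (Fin d) ℝ) = (M t)⁻¹ := by
    rw [← hu, Matrix.coe_units_inv]
  have hfun : (fun τ => (M τ)⁻¹ i j) = ev ∘ Ring.inverse ∘ M := by
    funext τ
    simp [ev, Matrix.nonsing_inv_eq_ringInverse]
  have hder : -((M t)⁻¹ * M' * (M t)⁻¹) i j
      = ev ((-ContinuousLinearMap.mulLeftRight ℝ (Matrix (Fin d) (Fin d) ℝ) ↑u⁻¹ ↑u⁻¹) M') := by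
    simp [ev, hui]
  rw [hfun, hder]
  exact h2

end

/-- The entrywise integral of `a φφᵀ` over `[0, t]` is positive semidefinite: its quadratic form
at `x` is the integral of `a (φ ⬝ x)²`. -/
lemma posSemidef_gram {d : ℕ} {a : ℝ → ℝ} {φ : ℝ → Fin d → ℝ} {t : ℝ} (ht : 0 ≤ t)
    (hint : ∀ i j, IntervalIntegrable (fun s => a s * (φ s i * φ s j)) MeasureTheory.volume 0 t)
    (ha0 : ∀ s ∈ Set.Ici (0:ℝ), 0 ≤ a s) :
    (Matrix.of fun i j => ∫ s in (0:ℝ)..t, a s * (φ s i * φ s j)).PosSemidef := by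
  refine Matrix.PosSemidef.of_dotProduct_mulVec_nonneg ?_ fun x => ?_
  · ext i j
    simp [mul_comm (φ _ i)]
  · have key : star x ⬝ᵥ (Matrix.of fun i j => ∫ s in (0:ℝ)..t, a s * (φ s i * φ s j)) *ᵥ x
        = ∫ s in (0:ℝ)..t, a s * (∑ i, φ s i * x i) ^ 2 := by
      have hexp : ∀ s, a s * (∑ i, φ s i * x i) ^ 2
          = ∑ i, ∑ j, (x i * x j) * (a s * (φ s i * φ s j)) := by
        intro s
        rw [sq, Finset.sum_mul_sum, Finset.mul_sum]
        refine Finset.sum_congr rfl fun i _ => ?_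
        rw [Finset.mul_sum]
        exact Finset.sum_congr rfl fun j _ => by ring
      simp_rw [hexp]
      have hrow : ∀ i ∈ Finset.univ, IntervalIntegrable
          (fun s => ∑ j, (x i * x j) * (a s * (φ s i * φ s j))) MeasureTheory.volume 0 t := by
        intro i _
        simpa only [Finset.sum_fn] using
          IntervalIntegrable.sum Finset.univ fun j _ => (hint i j).const_mul (x i * x j)
      rw [intervalIntegral.integral_finsetSum hrow]
      simp only [dotProduct, mulVec, Matrix.of_apply, Pi.star_apply, star_trivial]
      refine Finset.sum_congr rfl fun i _ => ?_
      rw [intervalIntegral.integral_finsetSum fun j _ => (hint i j).const_mul _, Finset.mul_sum]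
      refine Finset.sum_congr rfl fun j _ => ?_
      rw [intervalIntegral.integral_const_mul]
      ring
    rw [key]
    exact intervalIntegral.integral_nonneg ht fun s hs => mul_nonneg (ha0 s hs.1) (sq_nonneg _)

/-- `M(t) = P₀⁻¹ + ∫₀ᵗ a(s) φ(s)φ(s)ᵀ ds` is positive definite for `t ≥ 0`,
and `P(t) = M(t)⁻¹` satisfies `P(0) = P₀` and `P′(t) = −a(t) P(t) φ(t)φ(t)ᵀ P(t)`. -/
theorem wls_covariance_ode {d : ℕ}
    (a : ℝ → ℝ) (φ : ℝ → Fin d → ℝ) (P₀ : Matrix (Fin d) (Fin d) ℝ)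
    (ha : ContinuousOn a (Set.Ici 0)) (ha0 : ∀ t ∈ Set.Ici (0:ℝ), 0 ≤ a t)
    (hφ : ContinuousOn φ (Set.Ici 0))
    (hP₀ : P₀.PosDef) :
    (∀ t ∈ Set.Ici (0:ℝ),
      (P₀⁻¹ + Matrix.of fun i j => ∫ s in (0:ℝ)..t, a s * (φ s i * φ s j)).PosDef) ∧
    (P₀⁻¹ + Matrix.of fun i j => ∫ s in (0:ℝ)..(0:ℝ), a s * (φ s i * φ s j))⁻¹ = P₀ ∧
    (∀ t ∈ Set.Ici (0:ℝ), ∀ i j : Fin d,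
      HasDerivWithinAt
        (fun τ => (P₀⁻¹ + Matrix.of fun i' j' => ∫ s in (0:ℝ)..τ, a s * (φ s i' * φ s j'))⁻¹ i j)
        (-(a t) *
          (((P₀⁻¹ + Matrix.of fun i' j' => ∫ s in (0:ℝ)..t, a s * (φ s i' * φ s j'))⁻¹ *
            Matrix.vecMulVec (φ t) (φ t) *
            (P₀⁻¹ + Matrix.of fun i' j' => ∫ s in (0:ℝ)..t, a s * (φ s i' * φ s j'))⁻¹) i j))
        (Set.Ici 0) t) := by
  have hc : ∀ i j, ContinuousOn (fun s => a s * (φ s i * φ s j)) (Set.Ici 0) := fun i j =>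
    ha.mul ((continuousOn_pi.1 hφ i).mul (continuousOn_pi.1 hφ j))
  have hpos : ∀ t ∈ Set.Ici (0:ℝ),
      (P₀⁻¹ + Matrix.of fun i j => ∫ s in (0:ℝ)..t, a s * (φ s i * φ s j)).PosDef := by
    intro t ht
    refine hP₀.inv.add_posSemidef (posSemidef_gram ht (fun i j => ?_) ha0)
    refine ((hc i j).mono ?_).intervalIntegrable
    rw [Set.uIcc_of_le ht]
    exact Set.Icc_subset_Ici_self
  refine ⟨hpos, ?_, fun t ht i j => ?_⟩
  · have h0 : (Matrix.of fun i j => ∫ s in (0:ℝ)..(0:ℝ), a s * (φ s i * φ s j)) = 0 := by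
      ext i j
      simp
    rw [h0, add_zero, Matrix.nonsing_inv_nonsing_inv _ ((Matrix.isUnit_iff_isUnit_det _).1 hP₀.isUnit)]
  · have h := hasDerivWithinAt_matrix_inv
      (M := fun τ => P₀⁻¹ + Matrix.of fun i j => ∫ s in (0:ℝ)..τ, a s * (φ s i * φ s j))
      (M' := a t • Matrix.vecMulVec (φ t) (φ t)) (s := Set.Ici 0) (t := t)
      (fun i j => (hasDerivWithinAt_integral_Ici (hc i j) ht).const_add _) (hpos t ht).isUnit i j
    convert h using 1
    rw [Matrix.mul_smul, Matrix.smul_mul, Matrix.smul_apply, smul_eq_mul, neg_mul]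
end
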